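/- arXiv:2001.09825 — 2 statements merged into one kernel-verified Lean document; each statement's English description precedes it below -/
import Mathlib

section
/- Let n = 2m−1 ≥ 3 be odd and g ≥ 1. The ℤ-linear map H^{⊗m} → (H^{⊗n})_{D_{2n}} defined on basis tensors by a_1⊗a_2⊗⋯⊗a_m ↦ [a_1⊗a_2⊗⋯⊗a_{m−1}⊗a_m⊗a_m⊗a_{m−1}⊗⋯⊗a_2] (a_i ∈ B; the right-hand side has n = 2m−1 tensor factors) induces a well-defined ℤ/2ℤ-linear map H^{⊗m} ⊗ ℤ/2ℤ → (H^{⊗n})_{D_{2n}}, and this induced map is injective with image exactly the torsion subgroup of (H^{⊗n})_{D_{2n}}. -/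
/-- Words of length `n` in the alphabet `Fin (2*g)`, i.e. index sets of basis tensors
of the `n`-fold tensor power of the free `ℤ`-module `H` on `2g` generators. -/
abbrev DWord (g n : ℕ) : Type := ZMod n → Fin (2 * g)

/-- The action of the generator `x` of the dihedral group `D_{2n}` on `H^{⊗n}`:
`x·(a_1⊗⋯⊗a_n) = a_n⊗a_1⊗⋯⊗a_{n-1}` (cyclic rotation of basis tensors). -/
noncomputable def rotMap (g n : ℕ) : Module.End ℤ ((DWord g n) →₀ ℤ) :=
  Finsupp.lmapDomain ℤ ℤ (fun w : DWord g n => fun i => w (i - 1))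

/-- The action of the generator `y` of the dihedral group `D_{2n}` on `H^{⊗n}`:
`y·(a_1⊗⋯⊗a_n) = (-1)^n · (a_n⊗⋯⊗a_1)` (reversal with sign). -/
noncomputable def revMap (g n : ℕ) : Module.End ℤ ((DWord g n) →₀ ℤ) :=
  ((-1 : ℤ) ^ n) • Finsupp.lmapDomain ℤ ℤ (fun w : DWord g n => fun i => w (-i - 1))

/-- The submodule generated by all `v - σ·v` where `σ` ranges over the elements
`x^k` and `x^k y` of the dihedral group `D_{2n}`. -/
noncomputable def dihedralAug (g n : ℕ) : Submodule ℤ ((DWord g n) →₀ ℤ) :=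
  Submodule.span ℤ {u | ∃ (k : ℕ) (v : (DWord g n) →₀ ℤ),
    u = v - (rotMap g n ^ k) v ∨ u = v - ((rotMap g n ^ k) * revMap g n) v}

/-- The coinvariants `(H^{⊗n})_{D_{2n}}`. -/
abbrev DCoinv (g n : ℕ) := ((DWord g n) →₀ ℤ) ⧸ dihedralAug g n

/-- The word of length `n = 2m-1` associated to a word `(a_1,…,a_m)` of length `m`,
namely `a_1 a_2 ⋯ a_{m-1} a_m a_m a_{m-1} ⋯ a_2` (here `w i = a_{i+1}`, 0-indexed). -/
def symWord (g m : ℕ) [NeZero (2 * m - 1)] (w : Fin m → Fin (2 * g)) :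
    DWord g (2 * m - 1) :=
  fun j =>
    if h : (ZMod.val j) < m then w ⟨ZMod.val j, h⟩
    else w ⟨2 * m - 1 - ZMod.val j, by
      have h1 := ZMod.val_lt j
      have h2 := NeZero.ne (2 * m - 1)
      omega⟩

/-- The `ℤ`-linear map `H^{⊗m} → (H^{⊗(2m-1)})_{D_{2(2m-1)}}` sending the basis tensor
`a_1⊗⋯⊗a_m` to the class of `a_1⊗⋯⊗a_{m-1}⊗a_m⊗a_m⊗a_{m-1}⊗⋯⊗a_2`. -/
noncomputable def symEmbed (g m : ℕ) [NeZero (2 * m - 1)] :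
    ((Fin m → Fin (2 * g)) →₀ ℤ) →ₗ[ℤ] DCoinv g (2 * m - 1) :=
  (dihedralAug g (2 * m - 1)).mkQ ∘ₗ Finsupp.lmapDomain ℤ ℤ (symWord g m)

/-!
Coinvariants of a signed permutation module split over the orbits. An orbit is *achiral* if some
element of sign `-1` fixes a point of it. A chiral orbit contributes a copy of `ℤ`, detected by the
signed sum of the coefficients along it; an achiral orbit contributes a copy of `ℤ/2`, detected by
the sum of the coefficients modulo 2. So the torsion is spanned by the classes of achiral points.

For odd `n` the elements of sign `-1` in the dihedral group are the reflections. As 2 is invertible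
modulo `n`, every reflection is conjugate to the one fixing the position `0`, and two words in the
same orbit that are both fixed by this reflection are equal. Hence the words
`a_1 a_2 ⋯ a_m a_m ⋯ a_2` meet every achiral orbit exactly once.
-/

open MulAction Representation

section SignedPermRep

variable {R G X ι : Type*} [CommRing R] [Group G] [MulAction G X]

variable (R X) in
/-- The permutation representation of `G` on the free `R`-module over a `G`-set `X`, twisted by a
sign character `χ`: the group element `h` sends the basis vector `x` to `χ h • (h • x)`. -/
noncomputable def signedPermRep (χ : G →* ℤˣ) : Representation R G (X →₀ R) where
  toFun h := χ h • Finsupp.lmapDomain R R (h • · : X → X)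
  map_one' := by ext; simp
  map_mul' h₁ h₂ := by ext; simp [mul_smul, smul_comm (χ h₁)]

/-- A point of a `G`-set is achiral for a sign character `χ` if its stabilizer contains an element
of sign `-1`, so that its basis vector is identified with its own negative in the coinvariants. -/
def IsAchiral (χ : G →* ℤˣ) (x : X) : Prop := ∃ h : G, h • x = x ∧ χ h = -1

variable {χ : G →* ℤˣ} {x : X}

theorem signedPermRep_apply (h : G) :
    signedPermRep R X χ h = χ h • Finsupp.lmapDomain R R (h • · : X → X) :=
  rfl

theorem signedPermRep_single (h : G) (x : X) (a : R) :
    signedPermRep R X χ h (Finsupp.single x a) = χ h • Finsupp.single (h • x) a := by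
  simp [signedPermRep]

theorem IsAchiral.smul (hx : IsAchiral χ x) (h : G) : IsAchiral χ (h • x) := by
  obtain ⟨s, hsx, hs⟩ := hx
  exact ⟨h * s * h⁻¹, by rw [mul_smul, inv_smul_smul, mul_smul, hsx], by simp [hs]⟩

theorem isAchiral_smul_iff (h : G) : IsAchiral χ (h • x) ↔ IsAchiral χ x :=
  ⟨fun hx ↦ by simpa using hx.smul h⁻¹, fun hx ↦ hx.smul h⟩

theorem sign_eq_of_smul_eq_smul (hx : ¬ IsAchiral χ x) {h₁ h₂ : G}
    (h : h₁ • x = h₂ • x) : χ h₁ = χ h₂ := by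
  have hfix : (h₂⁻¹ * h₁) • x = x := by rw [mul_smul, h, inv_smul_smul]
  have hsign : χ (h₂⁻¹ * h₁) = 1 :=
    (Int.units_eq_one_or _).resolve_right fun hneg ↦ hx ⟨_, hfix, hneg⟩
  rwa [map_mul, map_inv, inv_mul_eq_one, eq_comm] at hsign

theorem mk_single_smul (h : G) (x : X) (a : R) :
    Coinvariants.mk (signedPermRep R X χ) (Finsupp.single (h • x) a) =
      χ h • Coinvariants.mk (signedPermRep R X χ) (Finsupp.single x a) := by
  rw [← Coinvariants.mk_self_apply _ h (Finsupp.single x a), signedPermRep_single,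
    map_zsmul_unit, smul_smul, Int.units_mul_self, one_smul]

theorem IsAchiral.two_smul_mk_single (hx : IsAchiral χ x) (a : R) :
    (2 : R) • Coinvariants.mk (signedPermRep R X χ) (Finsupp.single x a) = 0 := by
  obtain ⟨h, hfix, hsign⟩ := hx
  have hneg := mk_single_smul (χ := χ) h x a
  rw [hfix, hsign, Units.neg_smul, one_smul] at hneg
  rw [two_smul, ← eq_neg_iff_add_eq_zero]
  exact hneg

theorem two_smul_mk_lmapDomain {t : ι → X} (ht : ∀ i, IsAchiral χ (t i)) (v : ι →₀ R) :
    (2 : R) • Coinvariants.mk (signedPermRep R X χ) (Finsupp.lmapDomain R R t v) = 0 := by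
  suffices (2 : R) • Coinvariants.mk (signedPermRep R X χ) ∘ₗ Finsupp.lmapDomain R R t = 0 from
    LinearMap.congr_fun this v
  ext i
  simpa using (ht i).two_smul_mk_single (1 : R)

theorem intUnits_smul_quotient_two (u : ℤˣ) (c : R ⧸ Ideal.span {(2 : R)}) : u • c = c := by
  have htwo : (2 : R ⧸ Ideal.span {(2 : R)}) = 0 :=
    Ideal.Quotient.eq_zero_iff_mem.2 (Ideal.mem_span_singleton_self 2)
  obtain rfl | rfl := Int.units_eq_one_or u
  · exact one_smul _ c
  · rw [Units.neg_smul, one_smul, neg_eq_iff_add_eq_zero, ← two_mul, htwo, zero_mul]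

variable (R X χ) in
/-- The map on coinvariants that adds up, modulo 2, the coefficients along each orbit. It is well
defined because signs are invisible modulo 2. -/
noncomputable def orbitSumModTwo :
    (signedPermRep R X χ).Coinvariants →ₗ[R]
      (orbitRel.Quotient G X →₀ R ⧸ Ideal.span {(2 : R)}) :=
  Coinvariants.lift _
    (Finsupp.mapRange.linearMap (Submodule.mkQ _) ∘ₗ
      Finsupp.lmapDomain R R (Quotient.mk (orbitRel G X)))
    fun h ↦ by
      ext x : 2
      simp [signedPermRep_single, intUnits_smul_quotient_two]

theorem two_dvd_of_mk_lmapDomain_eq_zero {t : ι → X}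
    (hinj : ∀ i j, t i ∈ orbit G (t j) → i = j) {v : ι →₀ R}
    (hv : Coinvariants.mk (signedPermRep R X χ) (Finsupp.lmapDomain R R t v) = 0) (i : ι) :
    2 ∣ v i := by
  have horbit : Function.Injective (Quotient.mk (orbitRel G X) ∘ t) :=
    fun i j hij ↦ hinj i j (Quotient.exact hij)
  have hcoeff := congr(orbitSumModTwo R X χ $hv (Quotient.mk (orbitRel G X) (t i)))
  rw [orbitSumModTwo, Coinvariants.lift_mk] at hcoeff
  simp only [LinearMap.comp_apply, Finsupp.lmapDomain_apply, ← Finsupp.mapDomain_comp,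
    Finsupp.mapRange.linearMap_apply, Finsupp.mapRange_apply, map_zero,
    Finsupp.zero_apply] at hcoeff
  rw [← Function.comp_apply (f := Quotient.mk (orbitRel G X)) (g := t),
    Finsupp.mapDomain_apply horbit, Submodule.mkQ_apply, Submodule.Quotient.mk_eq_zero] at hcoeff
  exact Ideal.mem_span_singleton.1 hcoeff

theorem exists_eq_smul_of_forall_dvd {r : R} {v : ι →₀ R} (h : ∀ i, r ∣ v i) :
    ∃ u, v = r • u := by
  have hrange : v ∈ Set.range (Finsupp.mapRange (r • · : R → R) (smul_zero r)) := by
    rw [Finsupp.range_mapRange]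
    exact fun i ↦ (h i).imp fun _ ↦ Eq.symm
  obtain ⟨u, rfl⟩ := hrange
  exact ⟨u, by ext; simp⟩

theorem mk_lmapDomain_eq_zero_iff {t : ι → X} (ht : ∀ i, IsAchiral χ (t i))
    (hinj : ∀ i j, t i ∈ orbit G (t j) → i = j) {v : ι →₀ R} :
    Coinvariants.mk (signedPermRep R X χ) (Finsupp.lmapDomain R R t v) = 0 ↔
      ∃ u, v = (2 : R) • u := by
  refine ⟨fun hv ↦ exists_eq_smul_of_forall_dvd (two_dvd_of_mk_lmapDomain_eq_zero hinj hv), ?_⟩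
  rintro ⟨u, rfl⟩
  rw [map_smul, map_smul, two_smul_mk_lmapDomain ht]

theorem exists_smul_out_eq (x : X) : ∃ h : G, h • (Quotient.mk (orbitRel G X) x).out = x :=
  mem_orbit_symm.1 (Quotient.mk_out (s := orbitRel G X) x)

/-- The sign of `x` relative to the chosen representative of its orbit: the sign of some group
element carrying the representative to `x`. It depends on that element only if `x` is achiral. -/
noncomputable def orientation (χ : G →* ℤˣ) (x : X) : ℤˣ :=
  χ (exists_smul_out_eq (G := G) x).choose

theorem orientation_eq (hx : ¬ IsAchiral χ x) {h : G}
    (hout : h • (Quotient.mk (orbitRel G X) x).out = x) : orientation χ x = χ h := by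
  refine sign_eq_of_smul_eq_smul (x := (Quotient.mk (orbitRel G X) x).out) ?_ ?_
  · rwa [← hout, isAchiral_smul_iff] at hx
  · rw [(exists_smul_out_eq x).choose_spec, hout]

theorem orientation_smul (hx : ¬ IsAchiral χ x) (h : G) :
    orientation χ (h • x) = χ h * orientation χ x := by
  obtain ⟨k, hk⟩ := exists_smul_out_eq (G := G) x
  have hhk : (h * k) • (Quotient.mk (orbitRel G X) (h • x)).out = h • x := by
    simp [mul_smul, hk]
  rw [orientation_eq hx hk, orientation_eq ((isAchiral_smul_iff h).not.2 hx) hhk, map_mul]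

theorem orientation_smul_mk_single_out (x : X) (a : R) :
    orientation χ x • Coinvariants.mk (signedPermRep R X χ)
      (Finsupp.single (Quotient.mk (orbitRel G X) x).out a) =
      Coinvariants.mk (signedPermRep R X χ) (Finsupp.single x a) := by
  rw [orientation, ← mk_single_smul, (exists_smul_out_eq x).choose_spec]

open Classical in
variable (R X χ) in
/-- The map on coinvariants that adds up the coefficients along each chiral orbit, with the signs
given by `orientation`, and forgets the achiral orbits. -/
noncomputable def orientedOrbitSum :
    (signedPermRep R X χ).Coinvariants →ₗ[R] (orbitRel.Quotient G X →₀ R) :=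
  Coinvariants.lift _
    (Finsupp.linearCombination R fun x ↦ if IsAchiral χ x then 0 else
      orientation χ x • Finsupp.single (Quotient.mk (orbitRel G X) x) (1 : R))
    fun h ↦ by
      ext x : 2
      by_cases hx : IsAchiral χ x
      · simp [signedPermRep_single, isAchiral_smul_iff, hx]
      · simp [signedPermRep_single, isAchiral_smul_iff, hx, orientation_smul hx, smul_smul,
          ← mul_assoc]

variable (R X χ) in
/-- The submodule of the coinvariants generated by the classes of the achiral basis vectors. -/
noncomputable def achiralSpan : Submodule R (signedPermRep R X χ).Coinvariants :=
  Submodule.span R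
    {c | ∃ x, IsAchiral χ x ∧ Coinvariants.mk (signedPermRep R X χ) (Finsupp.single x 1) = c}

theorem mem_achiralSpan_of_orientedOrbitSum_eq_zero {c : (signedPermRep R X χ).Coinvariants}
    (hc : orientedOrbitSum R X χ c = 0) : c ∈ achiralSpan R X χ := by
  let fromOrbits : (orbitRel.Quotient G X →₀ R) →ₗ[R] (signedPermRep R X χ).Coinvariants :=
    Coinvariants.mk _ ∘ₗ Finsupp.lmapDomain R R Quotient.out
  have hsection : (achiralSpan R X χ).mkQ ∘ₗ fromOrbits ∘ₗ orientedOrbitSum R X χ =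
      (achiralSpan R X χ).mkQ := by
    ext x
    by_cases hx : IsAchiral χ x
    · have hmem : Coinvariants.mk (signedPermRep R X χ) (Finsupp.single x 1) ∈ achiralSpan R X χ :=
        Submodule.subset_span ⟨x, hx, rfl⟩
      simpa [orientedOrbitSum, hx, eq_comm (a := (0 : _ ⧸ _))] using hmem
    · have hout := congr((achiralSpan R X χ).mkQ
        $(orientation_smul_mk_single_out (χ := χ) x (1 : R)))
      rw [← map_zsmul_unit] at hout
      simpa [orientedOrbitSum, hx, fromOrbits] using hout
  rw [← Submodule.Quotient.mk_eq_zero, ← Submodule.mkQ_apply, ← hsection]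
  simp [hc]

theorem torsion_coinvariants_eq_achiralSpan (h2 : (2 : R) ∈ nonZeroDivisors R) :
    Submodule.torsion R (signedPermRep R X χ).Coinvariants = achiralSpan R X χ := by
  apply le_antisymm
  · rintro c ⟨a, hac⟩
    apply mem_achiralSpan_of_orientedOrbitSum_eq_zero
    have hsum : (a : R) • orientedOrbitSum R X χ c = 0 := by
      rw [← map_smul, ← Submonoid.smul_def, hac, map_zero]
    ext ω
    exact (mul_left_mem_nonZeroDivisors_eq_zero_iff a.2).1 congr($hsum ω)
  · rw [achiralSpan, Submodule.span_le]
    rintro _ ⟨x, hx, rfl⟩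
    exact ⟨⟨2, h2⟩, hx.two_smul_mk_single 1⟩

theorem range_mk_lmapDomain_eq_achiralSpan {t : ι → X} (ht : ∀ i, IsAchiral χ (t i))
    (hsurj : ∀ x, IsAchiral χ x → ∃ i, x ∈ orbit G (t i)) :
    LinearMap.range (Coinvariants.mk (signedPermRep R X χ) ∘ₗ Finsupp.lmapDomain R R t) =
      achiralSpan R X χ := by
  have hrange : LinearMap.range (Coinvariants.mk (signedPermRep R X χ) ∘ₗ
      Finsupp.lmapDomain R R t) = Submodule.span R (Set.range fun i ↦
        Coinvariants.mk (signedPermRep R X χ) (Finsupp.single (t i) 1)) := by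
    rw [← Finsupp.range_linearCombination]
    congr 1
    ext i
    simp
  rw [hrange, achiralSpan]
  apply le_antisymm
  · exact Submodule.span_mono (Set.range_subset_iff.2 fun i ↦ ⟨t i, ht i, rfl⟩)
  · rw [Submodule.span_le]
    rintro _ ⟨x, hx, rfl⟩
    obtain ⟨i, h, rfl⟩ := hsurj x hx
    rw [SetLike.mem_coe, mk_single_smul]
    exact Submodule.smul_of_tower_mem _ _ (Submodule.subset_span ⟨i, rfl⟩)

end SignedPermRep

open DihedralGroup

attribute [local instance] arrowAction

section Dihedral

variable {n : ℕ}

/-- The dihedral group acting on the vertices of the `n`-gon: `r k` is the rotation by `k` and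
`sr k` the reflection `i ↦ -i - k`. Under the induced action on words the generators `x` and `y` of
the statement are `r 1` and `sr 1`, while the words `symWord` are the fixed points of `sr 0`. -/
instance dihedralMulAction : MulAction (DihedralGroup n) (ZMod n) where
  smul
    | r k, i => i + k
    | sr k, i => -i - k
  one_smul i := add_zero i
  mul_smul
    | r k, r l, i => show i + (k + l) = i + l + k by ring
    | r k, sr l, i => show -i - (l - k) = -i - l + k by ring
    | sr k, r l, i => show -i - (k + l) = -(i + l) - k by ring
    | sr k, sr l, i => show i + (l - k) = -(-i - l) - k by ring

theorem r_smul_apply {A : Type*} (k : ZMod n) (w : ZMod n → A) (i : ZMod n) :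
    (r k • w) i = w (i - k) :=
  congrArg w (sub_eq_add_neg i k).symm

theorem sr_smul_apply {A : Type*} (k : ZMod n) (w : ZMod n → A) (i : ZMod n) :
    (sr k • w) i = w (-i - k) :=
  rfl

variable (n) in
/-- The sign character by which `D_{2n}` twists the permutation of tensor factors: rotations have
sign `1` and reflections have sign `(-1)^n`. -/
def dihedralSign : DihedralGroup n →* ℤˣ where
  toFun
    | r _ => 1
    | sr _ => (-1) ^ n
  map_one' := rfl
  map_mul'
    | r _, r _ => (one_mul 1).symm
    | r _, sr _ => (one_mul _).symm
    | sr _, r _ => (mul_one _).symm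
    | sr _, sr _ => (Int.units_mul_self _).symm

theorem dihedralSign_r (k : ZMod n) : dihedralSign n (r k) = 1 := rfl

theorem dihedralSign_sr (k : ZMod n) : dihedralSign n (sr k) = (-1) ^ n := rfl

section OddAction

variable {X : Type*} [MulAction (DihedralGroup n) X] {x y : X}

theorem isAchiral_dihedralSign_iff (hn : Odd n) :
    IsAchiral (dihedralSign n) x ↔ ∃ k : ZMod n, sr k • x = x := by
  constructor
  · rintro ⟨k | k, hfix, hsign⟩
    · rw [dihedralSign_r] at hsign
      exact absurd hsign (by decide)
    · exact ⟨k, hfix⟩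
  · rintro ⟨k, hfix⟩
    exact ⟨sr k, hfix, by rw [dihedralSign_sr, hn.neg_one_pow]⟩

theorem exists_add_self_mul_natCast_eq (hn : Odd n) : ∃ q : ℕ, ∀ k : ZMod n, (k + k) * q = k := by
  obtain ⟨p, rfl⟩ := hn
  refine ⟨p + 1, fun k ↦ ?_⟩
  have hzero : (2 * p + 1 : ZMod (2 * p + 1)) = 0 := mod_cast ZMod.natCast_self (2 * p + 1)
  push_cast
  linear_combination k * hzero

/-- Since 2 is invertible modulo `n`, all reflections are conjugate by rotations. -/
theorem exists_sr_zero_smul_r_smul_eq (hn : Odd n) {k : ZMod n} (hk : sr k • x = x) :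
    ∃ j : ZMod n, (sr 0 : DihedralGroup n) • r j • x = r j • x := by
  obtain ⟨q, hq⟩ := exists_add_self_mul_natCast_eq hn
  obtain ⟨j, hj⟩ : ∃ j, j + j = k := ⟨k * q, by rw [← add_mul, hq]⟩
  have hconj : sr 0 * r j = r j * sr k := by
    rw [sr_mul_r, r_mul_sr, ← hj, zero_add, add_sub_cancel_right]
  exact ⟨j, by rw [smul_smul, hconj, mul_smul, hk]⟩

theorem r_smul_eq_of_r_add_self_smul_eq (hn : Odd n) {k : ZMod n} (hk : r (k + k) • x = x) :
    r k • x = x := by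
  obtain ⟨q, hq⟩ := exists_add_self_mul_natCast_eq hn
  have hpow : r (k + k) ^ q ∈ stabilizer (DihedralGroup n) x := pow_mem hk q
  rwa [r_pow, hq] at hpow

theorem eq_of_mem_orbit_of_sr_zero_smul_eq (hn : Odd n) (hx : (sr 0 : DihedralGroup n) • x = x)
    (hy : (sr 0 : DihedralGroup n) • y = y) (hxy : y ∈ orbit (DihedralGroup n) x) : y = x := by
  obtain ⟨k, rfl⟩ : ∃ k : ZMod n, r k • x = y := by
    obtain ⟨k | k, rfl⟩ := hxy
    · exact ⟨k, rfl⟩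
    · exact ⟨-k, by nth_rw 2 [← hx]; simp [smul_smul]⟩
  apply r_smul_eq_of_r_add_self_smul_eq hn
  calc r (k + k) • x = r k • (sr 0 : DihedralGroup n) • r k • x := by rw [hy, smul_smul, r_mul_r]
    _ = (sr 0 : DihedralGroup n) • x := by simp [smul_smul]
    _ = x := hx

end OddAction

section Words

variable {g m : ℕ}

theorem rotMap_eq (g n : ℕ) :
    rotMap g n = signedPermRep ℤ (DWord g n) (dihedralSign n) (r 1) := by
  rw [signedPermRep_apply, dihedralSign_r, one_smul, rotMap]
  congr 1
  funext w i
  exact (r_smul_apply 1 w i).symm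

theorem revMap_eq (g n : ℕ) :
    revMap g n = signedPermRep ℤ (DWord g n) (dihedralSign n) (sr 1) := by
  rw [signedPermRep_apply, dihedralSign_sr, revMap, Units.smul_def, Units.val_pow_eq_pow_val,
    Units.val_neg, Units.val_one]
  rfl

theorem dihedralAug_eq_ker (g n : ℕ) [NeZero n] :
    dihedralAug g n = Coinvariants.ker (signedPermRep ℤ (DWord g n) (dihedralSign n)) := by
  rw [dihedralAug, rotMap_eq, revMap_eq]
  simp only [← map_pow, ← map_mul, r_one_pow, r_mul_sr]
  apply le_antisymm
  · rw [Submodule.span_le]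
    rintro _ ⟨k, v, rfl | rfl⟩ <;> exact sub_mem_comm_iff.1 (Coinvariants.sub_mem_ker _ v)
  · rw [Coinvariants.ker, Submodule.span_le]
    rintro _ ⟨⟨k | k, v⟩, rfl⟩ <;> rw [SetLike.mem_coe, sub_mem_comm_iff]
    · exact Submodule.subset_span ⟨k.val, v, .inl (by simp)⟩
    · exact Submodule.subset_span ⟨(1 - k).val, v, .inr (by simp)⟩

variable [NeZero (2 * m - 1)]

theorem sr_zero_smul_symWord (u : Fin m → Fin (2 * g)) :
    (sr 0 : DihedralGroup (2 * m - 1)) • symWord g m u = symWord g m u := by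
  funext j
  have hj := ZMod.val_lt j
  rw [sr_smul_apply, sub_zero]
  by_cases h0 : j = 0
  · rw [h0, neg_zero]
  have hval : (-j).val = 2 * m - 1 - j.val := by rw [ZMod.neg_val, if_neg h0]
  have hpos : j.val ≠ 0 := (ZMod.val_ne_zero j).2 h0
  unfold symWord
  split_ifs <;> first | omega | congr 2 <;> omega

theorem exists_symWord_eq {w : DWord g (2 * m - 1)}
    (hw : (sr 0 : DihedralGroup (2 * m - 1)) • w = w) : ∃ u, symWord g m u = w := by
  refine ⟨fun i ↦ w (i : ℕ), funext fun j ↦ ?_⟩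
  unfold symWord
  split_ifs with hj
  · simp
  · calc w (2 * m - 1 - j.val : ℕ) = w (-j) := by simp [Nat.cast_sub (ZMod.val_lt j).le]
      _ = w j := by simpa [sr_smul_apply] using congrFun hw j

theorem symWord_injective : Function.Injective (symWord g m) := by
  intro u u' h
  funext i
  have hi : (i : ZMod (2 * m - 1)).val = i := ZMod.val_cast_of_lt (by omega)
  simpa [symWord, hi] using congrFun h (i : ℕ)

variable (m) in
theorem odd_two_mul_sub_one : Odd (2 * m - 1) :=
  ⟨m - 1, by have := NeZero.ne (2 * m - 1); omega⟩

theorem isAchiral_symWord (u : Fin m → Fin (2 * g)) :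
    IsAchiral (dihedralSign (2 * m - 1)) (symWord g m u) :=
  (isAchiral_dihedralSign_iff (odd_two_mul_sub_one m)).2 ⟨0, sr_zero_smul_symWord u⟩

theorem eq_of_symWord_mem_orbit (u u' : Fin m → Fin (2 * g))
    (h : symWord g m u ∈ orbit (DihedralGroup (2 * m - 1)) (symWord g m u')) : u = u' :=
  symWord_injective <| eq_of_mem_orbit_of_sr_zero_smul_eq (odd_two_mul_sub_one m)
    (sr_zero_smul_symWord u') (sr_zero_smul_symWord u) h

theorem exists_mem_orbit_symWord (w : DWord g (2 * m - 1))
    (hw : IsAchiral (dihedralSign (2 * m - 1)) w) :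
    ∃ u, w ∈ orbit (DihedralGroup (2 * m - 1)) (symWord g m u) := by
  obtain ⟨k, hk⟩ := (isAchiral_dihedralSign_iff (odd_two_mul_sub_one m)).1 hw
  obtain ⟨j, hj⟩ := exists_sr_zero_smul_r_smul_eq (odd_two_mul_sub_one m) hk
  obtain ⟨u, hu⟩ := exists_symWord_eq hj
  exact ⟨u, hu ▸ mem_orbit_smul (r j) w⟩

end Words

end Dihedral

/-- Let `n = 2m-1 ≥ 3` be odd and `g ≥ 1`.  The `ℤ`-linear map
`H^{⊗m} → (H^{⊗n})_{D_{2n}}`, `a_1⊗⋯⊗a_m ↦ [a_1⊗⋯⊗a_{m-1}⊗a_m⊗a_m⊗a_{m-1}⊗⋯⊗a_2]`,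
kills `2·H^{⊗m}` (hence induces a well-defined `ℤ/2ℤ`-linear map on `H^{⊗m} ⊗ ℤ/2ℤ`),
its kernel is exactly `2·H^{⊗m}` (so the induced map is injective), and its image is
exactly the torsion subgroup of `(H^{⊗n})_{D_{2n}}`. -/
theorem stmt_3 (g m : ℕ) (hg : 1 ≤ g) (hm : 2 ≤ m) [NeZero (2 * m - 1)] :
    (∀ v, symEmbed g m ((2 : ℤ) • v) = 0) ∧
    (∀ v, symEmbed g m v = 0 ↔ ∃ u, v = (2 : ℤ) • u) ∧
    LinearMap.range (symEmbed g m) = Submodule.torsion ℤ (DCoinv g (2 * m - 1)) := by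
  unfold symEmbed DCoinv
  rw [dihedralAug_eq_ker]
  refine ⟨fun v ↦ ?_, fun v ↦ ?_, ?_⟩
  · rw [map_smul]
    exact two_smul_mk_lmapDomain isAchiral_symWord v
  · exact mk_lmapDomain_eq_zero_iff isAchiral_symWord eq_of_symWord_mem_orbit
  · exact (range_mk_lmapDomain_eq_achiralSpan isAchiral_symWord exists_mem_orbit_symWord).trans
      (torsion_coinvariants_eq_achiralSpan (by simp)).symm
end

section
/- Let n = 2m−1 ≥ 1 be odd. The map A^m → {necklaces of length n over A} sending (a_1, a_2, …, a_m) to the necklace (rotation class) of the word a_1a_2⋯a_{m−1}a_m a_m a_{m−1}⋯a_2 of length n is a bijection from A^m onto the set of symmetric necklaces of length n. -/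
/-- Two words `w, w'` of length `N` (functions `ZMod N → A`) are related iff `w'` is a
rotation of `w`, i.e. `w' = k·w` where `(k·w)(i) = w(i−k)`.  Necklaces are the orbits,
i.e. the elements of `Quot (rotRel N A)`. -/
def rotRel (N : ℕ) (A : Type*) : (ZMod N → A) → (ZMod N → A) → Prop :=
  fun w w' => ∃ k : ZMod N, ∀ i, w' i = w (i - k)

/-- A word `w` of length `N` is symmetric iff there is `k` with `w(−i) = w(k+i)` for
all `i` (equivalently, its necklace is invariant under reversal). -/
def IsSymWord (N : ℕ) (A : Type*) (w : ZMod N → A) : Prop :=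
  ∃ k : ZMod N, ∀ i, w (-i) = w (k + i)

/-- The word `a_1 a_2 ⋯ a_{m−1} a_m a_m a_{m−1} ⋯ a_2` of length `n = 2m−1` associated
to `(a_1, …, a_m) ∈ A^m` (0-indexed: `f i = a_{i+1}`). -/
def symNeckWord (m : ℕ) [NeZero (2 * m - 1)] {A : Type*} (f : Fin m → A) :
    ZMod (2 * m - 1) → A :=
  fun j =>
    if h : (ZMod.val j) < m then f ⟨ZMod.val j, h⟩
    else f ⟨2 * m - 1 - ZMod.val j, by
      have h1 := ZMod.val_lt j
      have h2 := NeZero.ne (2 * m - 1)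
      omega⟩

/-!
The words `a_1 a_2 ⋯ a_m a_m ⋯ a_2` are exactly the even functions on `ZMod (2 * m - 1)`, so it
suffices that, for odd `N`, every symmetric necklace of length `N` contains exactly one even word.
A symmetric word is symmetric about half of some `k`, and `2` is invertible mod `N`, so rotating
by `k / 2` makes it even. If an even word stays even after rotation by `k`, composing the two
reflections shows that it has period `2 * k`, hence period `k`, and the rotation fixes it.
-/

section EvenFunctions

variable {G A : Type*} [AddCommGroup G] {f : G → A} {c k : G}

lemma periodic_two_nsmul_of_even_of_even_sub (hf : f.Even)
    (hfk : Function.Even fun x => f (x - k)) : f.Periodic (2 • k) := by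
  intro x
  calc f (x + 2 • k) = f (-(x + 2 • k)) := (hf _).symm
    _ = f (-(x + k) - k) := by congr 1; abel
    _ = f (x + k - k) := hfk (x + k)
    _ = f x := by rw [add_sub_cancel_right]

lemma periodic_of_periodic_two_nsmul (hk : Odd (addOrderOf k)) (hf : f.Periodic (2 • k)) :
    f.Periodic k := by
  obtain ⟨r, hr⟩ := exists_nsmul_eq_self_of_coprime hk.coprime_two_left
  simpa only [hr] using hf.nsmul r

lemma exists_two_nsmul_eq (hk : Odd (addOrderOf k)) : ∃ c : G, 2 • c = k := by
  obtain ⟨r, hr⟩ := exists_nsmul_eq_self_of_coprime hk.coprime_two_left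
  exact ⟨r • k, by rw [smul_comm, hr]⟩

lemma even_add_of_forall_neg_eq (hc : 2 • c = k) (hf : ∀ x, f (-x) = f (k + x)) :
    Function.Even fun x => f (x + c) := by
  intro x
  calc f (-x + c) = f (-(x - c)) := by congr 1; abel
    _ = f (k + (x - c)) := hf _
    _ = f (x + c) := by rw [← hc]; congr 1; abel

end EvenFunctions

section Words

variable {N : ℕ} {A : Type*} {w w' : ZMod N → A}

lemma rotRel_equivalence (N : ℕ) (A : Type*) : Equivalence (rotRel N A) where
  refl w := ⟨0, fun i => by rw [sub_zero]⟩
  symm := by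
    rintro w w' ⟨k, hk⟩
    exact ⟨-k, fun i => by rw [hk, sub_neg_eq_add, add_sub_cancel_right]⟩
  trans := by
    rintro w w' w'' ⟨k, hk⟩ ⟨l, hl⟩
    exact ⟨l + k, fun i => by rw [hl, hk, sub_sub]⟩

lemma quotMk_rotRel_eq_iff : Quot.mk (rotRel N A) w = Quot.mk (rotRel N A) w' ↔ rotRel N A w w' :=
  Quot.eq.trans (rotRel_equivalence N A).eqvGen_iff

lemma odd_addOrderOf_zmod (hN : Odd N) (k : ZMod N) : Odd (addOrderOf k) :=
  hN.of_dvd_nat <| by simpa only [Nat.card_zmod] using addOrderOf_dvd_natCard k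

lemma isSymWord_of_even (hw : w.Even) : IsSymWord N A w :=
  ⟨0, fun i => by rw [hw, zero_add]⟩

lemma eq_of_rotRel_of_even (hN : Odd N) (hw : w.Even) (hw' : w'.Even) (h : rotRel N A w w') :
    w = w' := by
  obtain ⟨k, hk⟩ := h
  obtain rfl : w' = fun i => w (i - k) := funext hk
  have hperiodic : w.Periodic k := periodic_of_periodic_two_nsmul (odd_addOrderOf_zmod hN k)
    (periodic_two_nsmul_of_even_of_even_sub hw hw')
  exact funext fun i => (hperiodic.sub_eq i).symm

lemma exists_even_rotRel_of_isSymWord (hN : Odd N) (hw : IsSymWord N A w) :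
    ∃ v : ZMod N → A, v.Even ∧ rotRel N A v w := by
  obtain ⟨k, hk⟩ := hw
  obtain ⟨c, hc⟩ := exists_two_nsmul_eq (odd_addOrderOf_zmod hN k)
  exact ⟨fun i => w (i + c), even_add_of_forall_neg_eq hc hk, c, fun i => by
    simp only [sub_add_cancel]⟩

lemma bijOn_quotMk_even_isSymWord (hN : Odd N) (A : Type*) :
    Set.BijOn (Quot.mk (rotRel N A)) {w | w.Even}
      (Quot.mk (rotRel N A) '' {w | IsSymWord N A w}) := by
  refine ⟨fun w hw => ⟨w, isSymWord_of_even hw, rfl⟩, fun w hw w' hw' h => ?_, ?_⟩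
  · exact eq_of_rotRel_of_even hN hw hw' (quotMk_rotRel_eq_iff.1 h)
  · rintro _ ⟨w, hw, rfl⟩
    obtain ⟨v, hv, hvw⟩ := exists_even_rotRel_of_isSymWord hN hw
    exact ⟨v, hv, Quot.sound hvw⟩

end Words

section SymNeckWord

variable {m : ℕ} [NeZero (2 * m - 1)] {A : Type*}

lemma symNeckWord_even (f : Fin m → A) : (symNeckWord m f).Even := by
  intro i
  obtain rfl | hi := eq_or_ne i 0
  · rw [neg_zero]
  have hneg : (-i).val = 2 * m - 1 - i.val := by rw [ZMod.neg_val, if_neg hi]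
  have hlt : i.val < 2 * m - 1 := i.val_lt
  have hpos : i.val ≠ 0 := (ZMod.val_ne_zero i).2 hi
  unfold symNeckWord
  split_ifs
  · omega
  · simp only [hneg]
  · congr 2
    omega
  · omega

lemma symNeckWord_natCast (f : Fin m → A) (i : Fin m) :
    symNeckWord m f ((i : ℕ) : ZMod (2 * m - 1)) = f i := by
  have hval : ((i : ℕ) : ZMod (2 * m - 1)).val = i := ZMod.val_cast_of_lt (by omega)
  simp only [symNeckWord, hval, i.is_lt, dite_true]

lemma symNeckWord_injective : Function.Injective (symNeckWord m (A := A)) := by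
  intro f g h
  funext i
  rw [← symNeckWord_natCast f, h, symNeckWord_natCast]

lemma symNeckWord_natCast_of_even {w : ZMod (2 * m - 1) → A} (hw : w.Even) :
    symNeckWord m (fun i : Fin m => w ((i : ℕ) : ZMod (2 * m - 1))) = w := by
  funext j
  simp only [symNeckWord]
  split_ifs
  · rw [ZMod.natCast_zmod_val]
  · rw [Nat.cast_sub j.val_lt.le, ZMod.natCast_self, ZMod.natCast_zmod_val, zero_sub, hw]

lemma bijOn_symNeckWord_even (m : ℕ) [NeZero (2 * m - 1)] (A : Type*) :
    Set.BijOn (symNeckWord m (A := A)) Set.univ {w | w.Even} :=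
  ⟨fun f _ => symNeckWord_even f, symNeckWord_injective.injOn,
    fun _ hw => ⟨_, Set.mem_univ _, symNeckWord_natCast_of_even hw⟩⟩

end SymNeckWord

theorem stmt_5_general (m : ℕ) [NeZero (2 * m - 1)] (A : Type*) :
    Function.Injective
      (fun f : Fin m → A => Quot.mk (rotRel (2 * m - 1) A) (symNeckWord m f)) ∧
    Set.range (fun f : Fin m → A => Quot.mk (rotRel (2 * m - 1) A) (symNeckWord m f)) =
      {c | ∃ w : ZMod (2 * m - 1) → A,
        IsSymWord (2 * m - 1) A w ∧ Quot.mk (rotRel (2 * m - 1) A) w = c} := by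
  have hodd : Odd (2 * m - 1) := by
    have hne : 2 * m - 1 ≠ 0 := NeZero.ne _
    exact ⟨m - 1, by omega⟩
  have hbij := (bijOn_quotMk_even_isSymWord hodd A).comp (bijOn_symNeckWord_even m A)
  exact ⟨Set.injOn_univ.1 hbij.injOn, Set.image_univ.symm.trans hbij.image_eq⟩

/-- Let `n = 2m−1 ≥ 1` be odd and `A` a finite alphabet.  The map `A^m → {necklaces of
length n}` sending `(a_1,…,a_m)` to the rotation class of `a_1⋯a_{m−1}a_m a_m a_{m−1}⋯a_2`
is a bijection from `A^m` onto the set of symmetric necklaces of length `n`. -/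
theorem stmt_5 (m : ℕ) (hm : 1 ≤ m) [NeZero (2 * m - 1)] (A : Type*) [Fintype A] :
    Function.Injective
      (fun f : Fin m → A => Quot.mk (rotRel (2 * m - 1) A) (symNeckWord m f)) ∧
    Set.range (fun f : Fin m → A => Quot.mk (rotRel (2 * m - 1) A) (symNeckWord m f)) =
      {c | ∃ w : ZMod (2 * m - 1) → A,
        IsSymWord (2 * m - 1) A w ∧ Quot.mk (rotRel (2 * m - 1) A) w = c} :=
  stmt_5_general m A
end
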